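/- Let π ∈ S_n and let τ be any permutation of {1,…,n−1}. Consider the rational function of independent variables σ_1,…,σ_{n−1}, x_1,…,x_{n−2}, t_1,…,t_{n−1}: S(σ, x, t) := ∑_{w ∈ S_{n−1}} G^β_w(x_1,…,x_{n−2}; ⊖σ_1,…,⊖σ_{n−2}) · ∂̄^β_w G^β_π(σ_1,…,σ_{n−1}; ⊖t_1,…,⊖t_{n−1}), where ∂̄^β_w acts on the σ-variables. Then substituting σ_j := x_{τ(j)} for j = 1,…,n−1 (so that e_l(σ_1,…,σ_{n−1}) = e_l(x_1,…,x_{n−1}) for every l = 1,…,n−1) yields S = G^β_π(x_1,…,x_{n−1}; ⊖t_1,…,⊖t_{n−1}). -/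

import Mathlib

noncomputable section
open scoped BigOperators

variable {F : Type*}

/-- `x ⊖ y := (x - y)/(1 + β·y)`. -/
def om [Field F] (β x y : F) : F := (x - y) / (1 + β * y)

/-- `⊖ t := -t/(1 + β·t)`. -/
def negOm [Field F] (β t : F) : F := (-t) / (1 + β * t)

/-- The R-matrix `R^{(n)}(x,y)` on `V ⊗ V`, `V = F^n`, with entries
`R_{ij,kl} = (1 + [k<l]·β(x⊖y)) δ_{il} δ_{jk} + [k>l]·(x⊖y) δ_{ik} δ_{jl}`;
the row index is the pair `(i,j)`, the column index is the pair `(k,l)`. -/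
def Rmat [Field F] (n : ℕ) (β x y : F) :
    Matrix (Fin n × Fin n) (Fin n × Fin n) F := Matrix.of fun p q =>
  (if p.1 = q.2 ∧ p.2 = q.1 then (if q.1 < q.2 then 1 + β * om β x y else 1) else 0) +
  (if p.1 = q.1 ∧ p.2 = q.2 ∧ q.2 < q.1 then om β x y else 0)

/-- The Coxeter length of a permutation: its number of inversions. -/
def permLength {N : ℕ} (w : Equiv.Perm (Fin N)) : ℕ :=
  (Finset.univ.filter fun p : Fin N × Fin N => p.1 < p.2 ∧ w p.2 < w p.1).card

/-- The longest permutation `ω_N : i ↦ N - 1 - i`. -/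
def omegaPerm (N : ℕ) : Equiv.Perm (Fin N) :=
  ⟨Fin.rev, Fin.rev, fun i => Fin.rev_rev i, fun i => Fin.rev_rev i⟩

/-- `IsGroth M β G` says that the family `G`, indexed by `S_{M+1}`, satisfies the
defining recursion of the double β-Grothendieck polynomials:
`G_{ω}(x;y) = ∏_{i+j ≤ M+1} (x_i + y_j + β x_i y_j)` (1-based indices), and
`G_{w s_i}(x;y) = ∂^β_i G_w(x;y)` whenever `ℓ(w s_i) = ℓ(w) - 1`
(the β-divided difference acting on the x-variables). -/
def IsGroth [Field F] (M : ℕ) (β : F)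
    (G : Equiv.Perm (Fin (M + 1)) → (Fin (M + 1) → F) → (Fin (M + 1) → F) → F) : Prop :=
  (∀ x y : Fin (M + 1) → F,
      G (omegaPerm (M + 1)) x y =
        ∏ p ∈ Finset.univ.filter
            (fun p : Fin (M + 1) × Fin (M + 1) => (p.1 : ℕ) + (p.2 : ℕ) + 2 ≤ M + 1),
          (x p.1 + y p.2 + β * x p.1 * y p.2)) ∧
  (∀ (w : Equiv.Perm (Fin (M + 1))) (i : Fin M) (x y : Fin (M + 1) → F),
      permLength (w * Equiv.swap i.castSucc i.succ) + 1 = permLength w →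
      x i.castSucc ≠ x i.succ →
      G (w * Equiv.swap i.castSucc i.succ) x y =
        ((1 + β * x i.succ) * G w x y -
            (1 + β * x i.castSucc) * G w (fun j => x (Equiv.swap i.castSucc i.succ j)) y) /
          (x i.castSucc - x i.succ))

/-- The operator `∂̄^β_i = ∂^β_i + β`, acting on functions of `M+1` variables
in the pair of variables with indices `i, i+1`. -/
def ddbar [Field F] {M : ℕ} (β : F) (i : Fin M) (f : (Fin (M + 1) → F) → F) :
    (Fin (M + 1) → F) → F := fun z =>
  ((1 + β * z i.succ) * f z -
      (1 + β * z i.castSucc) * f (fun j => z (Equiv.swap i.castSucc i.succ j))) /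
    (z i.castSucc - z i.succ) + β * f z

/-- `∂̄^β_{i_1} ∂̄^β_{i_2} ⋯ ∂̄^β_{i_ℓ}` for a word `L = [i_1, …, i_ℓ]`. -/
def ddbarWord [Field F] {M : ℕ} (β : F) (L : List (Fin M)) (f : (Fin (M + 1) → F) → F) :
    (Fin (M + 1) → F) → F :=
  L.foldr (ddbar β) f

/-- `L = [i_1, …, i_ℓ]` is a reduced word for `v`, i.e. `v = s_{i_1} ⋯ s_{i_ℓ}`
with `ℓ = ℓ(v)`. -/
def IsReducedWord {M : ℕ} (L : List (Fin M)) (v : Equiv.Perm (Fin (M + 1))) : Prop :=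
  (L.map fun i => Equiv.swap (Fin.castSucc i) (Fin.succ i)).prod = v ∧ L.length = permLength v

/-! ### Combinatorics of adjacent transpositions -/

/-- The adjacent transposition. -/
def adj {M : ℕ} (i : Fin M) : Equiv.Perm (Fin (M + 1)) := Equiv.swap i.castSucc i.succ

lemma adj_mul_self {M : ℕ} (i : Fin M) : adj i * adj i = 1 := Equiv.swap_mul_self _ _

lemma adj_inv {M : ℕ} (i : Fin M) : (adj i)⁻¹ = adj i := Equiv.swap_inv _ _

lemma mul_adj_adj {M : ℕ} (w : Equiv.Perm (Fin (M + 1))) (i : Fin M) :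
    w * adj i * adj i = w := by rw [mul_assoc, adj_mul_self, mul_one]

lemma adj_adj_mul {M : ℕ} (w : Equiv.Perm (Fin (M + 1))) (i : Fin M) :
    adj i * (adj i * w) = w := by rw [← mul_assoc, adj_mul_self, one_mul]

lemma adj_cast {M : ℕ} (i : Fin M) : adj i i.castSucc = i.succ := Equiv.swap_apply_left _ _

lemma adj_succ {M : ℕ} (i : Fin M) : adj i i.succ = i.castSucc := Equiv.swap_apply_right _ _

lemma adj_adj_apply {M : ℕ} (i : Fin M) (a : Fin (M + 1)) : adj i (adj i a) = a :=
  Equiv.swap_apply_self _ _ _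

lemma adj_ne {M : ℕ} (i : Fin M) (a : Fin (M + 1)) (h1 : a ≠ i.castSucc) (h2 : a ≠ i.succ) :
    adj i a = a := Equiv.swap_apply_of_ne_of_ne h1 h2

lemma adj_lt {M : ℕ} (j : Fin M) (a b : Fin (M + 1))
    (h1 : ¬ (a = j.castSucc ∧ b = j.succ)) (h2 : ¬ (a = j.succ ∧ b = j.castSucc)) :
    adj j a < adj j b ↔ a < b := by
  unfold adj
  rw [Equiv.swap_apply_def, Equiv.swap_apply_def]
  simp only [Fin.ext_iff, Fin.lt_def, Fin.val_castSucc, Fin.val_succ] at *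
  split_ifs <;> simp only [Fin.val_castSucc, Fin.val_succ] <;> omega

/-- right descent -/
def rdesc {M : ℕ} (j : Fin M) (w : Equiv.Perm (Fin (M + 1))) : Prop := w j.succ < w j.castSucc

/-- left descent -/
def ldesc {M : ℕ} (j : Fin M) (w : Equiv.Perm (Fin (M + 1))) : Prop :=
  w⁻¹ j.succ < w⁻¹ j.castSucc

lemma rdesc_or {M : ℕ} (j : Fin M) (w : Equiv.Perm (Fin (M + 1))) :
    rdesc j w ∨ rdesc j (w * adj j) := by
  unfold rdesc
  rw [Equiv.Perm.mul_apply, Equiv.Perm.mul_apply, adj_cast, adj_succ]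
  rcases lt_trichotomy (w j.succ) (w j.castSucc) with h | h | h
  · exact Or.inl h
  · have := w.injective h
    simp [Fin.ext_iff] at this
  · exact Or.inr h

lemma ldesc_inv {M : ℕ} (j : Fin M) (w : Equiv.Perm (Fin (M + 1))) :
    ldesc j w ↔ rdesc j w⁻¹ := Iff.rfl

lemma ldesc_or {M : ℕ} (j : Fin M) (w : Equiv.Perm (Fin (M + 1))) :
    ldesc j w ∨ ldesc j (adj j * w) := by
  rw [ldesc_inv, ldesc_inv, mul_inv_rev, adj_inv]
  exact rdesc_or j w⁻¹

/-- value inversions -/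
def vinv {N : ℕ} (w : Equiv.Perm (Fin N)) : Finset (Fin N × Fin N) :=
  Finset.univ.filter fun p : Fin N × Fin N => p.1 < p.2 ∧ w⁻¹ p.2 < w⁻¹ p.1

lemma card_vinv {N : ℕ} (w : Equiv.Perm (Fin N)) : (vinv w).card = permLength w := by
  unfold vinv permLength
  refine Finset.card_bij (fun p _ => (w⁻¹ p.2, w⁻¹ p.1)) ?_ ?_ ?_
  · intro p hp
    simp at hp ⊢
    exact ⟨hp.2, hp.1⟩
  · intro p _ q _ h
    simp at h
    exact Prod.ext h.2 h.1
  · intro p hp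
    refine ⟨(w p.2, w p.1), ?_, ?_⟩
    · simp at hp ⊢
      exact ⟨hp.2, hp.1⟩
    · simp

lemma permLength_inv {N : ℕ} (w : Equiv.Perm (Fin N)) : permLength w⁻¹ = permLength w :=
  card_vinv w

lemma vinv_notMem {M : ℕ} (j : Fin M) (w : Equiv.Perm (Fin (M + 1))) :
    (w j.succ, w j.castSucc) ∉ vinv (w * adj j) := by
  unfold vinv
  simp [mul_inv_rev, adj_inv, adj_cast, adj_succ]
  intro _
  exact le_of_lt (Fin.castSucc_lt_succ)

lemma vinv_insert {M : ℕ} (j : Fin M) (w : Equiv.Perm (Fin (M + 1))) (h : rdesc j w) :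
    vinv w = insert (w j.succ, w j.castSucc) (vinv (w * adj j)) := by
  ext ⟨c, d⟩
  obtain ⟨a, rfl⟩ := w.surjective c
  obtain ⟨b, rfl⟩ := w.surjective d
  unfold rdesc at h
  simp only [vinv, Finset.mem_filter, Finset.mem_univ, true_and, Finset.mem_insert, mul_inv_rev,
    adj_inv, Equiv.Perm.mul_apply, Equiv.Perm.coe_inv, Equiv.symm_apply_apply, Prod.mk.injEq, w.injective.eq_iff]
  by_cases h1 : b = j.castSucc ∧ a = j.succ
  · obtain ⟨rfl, rfl⟩ := h1
    simp [h]
  · by_cases h2 : b = j.succ ∧ a = j.castSucc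
    · obtain ⟨rfl, rfl⟩ := h2
      have : ¬ (w j.castSucc < w j.succ) := not_lt.2 h.le
      simp [this, Fin.ext_iff]
    · rw [adj_lt j b a h1 h2]
      tauto

lemma permLength_rdesc {M : ℕ} (j : Fin M) (w : Equiv.Perm (Fin (M + 1))) (h : rdesc j w) :
    permLength (w * adj j) + 1 = permLength w := by
  rw [← card_vinv, ← card_vinv, vinv_insert j w h, Finset.card_insert_of_notMem (vinv_notMem j w)]

lemma permLength_ldesc {M : ℕ} (j : Fin M) (w : Equiv.Perm (Fin (M + 1))) (h : ldesc j w) :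
    permLength (adj j * w) + 1 = permLength w := by
  rw [← permLength_inv (adj j * w), ← permLength_inv w, mul_inv_rev, adj_inv]
  exact permLength_rdesc j w⁻¹ h

lemma permLength_mul_adj_le {M : ℕ} (j : Fin M) (w : Equiv.Perm (Fin (M + 1))) :
    permLength (w * adj j) ≤ permLength w + 1 := by
  rcases rdesc_or j w with h | h
  · have := permLength_rdesc j w h
    omega
  · have := permLength_rdesc j _ h
    rw [mul_adj_adj] at this
    omega

lemma permLength_one {N : ℕ} : permLength (1 : Equiv.Perm (Fin N)) = 0 := by
  unfold permLength
  rw [Finset.card_eq_zero, Finset.filter_eq_empty_iff]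
  rintro p _ ⟨h1, h2⟩
  exact absurd h1 (not_lt.2 (le_of_lt h2))

lemma omegaPerm_apply {N : ℕ} (i : Fin N) : omegaPerm N i = i.rev := rfl

lemma omegaPerm_inv {N : ℕ} : (omegaPerm N)⁻¹ = omegaPerm N := rfl

lemma eq_one_of_le {N : ℕ} (u : Equiv.Perm (Fin N)) (h : ∀ i, i ≤ u i) : u = 1 := by
  have hs : ∑ i, ((u i : Fin N) : ℕ) = ∑ i : Fin N, (i : ℕ) :=
    Equiv.sum_comp u (fun i : Fin N => (i : ℕ))
  have := (Finset.sum_eq_sum_iff_of_le (s := Finset.univ)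
    (f := fun i : Fin N => (i : ℕ)) (g := fun i => ((u i : Fin N) : ℕ)) (fun i _ => h i)).1 hs.symm
  ext i
  exact (this i (Finset.mem_univ _)).symm

lemma eq_omega_of_le {N : ℕ} (u : Equiv.Perm (Fin N)) (h : ∀ i, i.rev ≤ u i) :
    u = omegaPerm N := by
  have : u * omegaPerm N = 1 := by
    apply eq_one_of_le
    intro i
    have := h i.rev
    rwa [Fin.rev_rev] at this
  rw [mul_eq_one_iff_eq_inv] at this
  rw [this, omegaPerm_inv]

lemma eq_omega_of_rdesc {M : ℕ} (w : Equiv.Perm (Fin (M + 1))) (h : ∀ j, rdesc j w) :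
    w = omegaPerm (M + 1) := by
  have ha : StrictMono (Fin.rev ∘ w) := by
    rw [Fin.strictMono_iff_lt_succ]
    intro i
    have := h i
    unfold rdesc at this
    simpa using this
  have hid : ∀ i : Fin (M + 1), i ≤ (w.trans (omegaPerm (M + 1))) i := by
    intro i
    exact ha.le_apply
  have := eq_one_of_le _ hid
  have h2 : omegaPerm (M + 1) * w = 1 := this
  rw [mul_eq_one_iff_inv_eq, omegaPerm_inv] at h2
  exact h2.symm

lemma perm_induction {M : ℕ} {P : Equiv.Perm (Fin (M + 1)) → Prop}
    (h0 : P (omegaPerm (M + 1)))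
    (hs : ∀ w j, rdesc j w → P w → P (w * adj j)) : ∀ w, P w := by
  have hb : ∀ w : Equiv.Perm (Fin (M + 1)),
      permLength w ≤ (Finset.univ : Finset (Fin (M + 1) × Fin (M + 1))).card :=
    fun w => Finset.card_le_card (Finset.filter_subset _ _)
  have key : ∀ n, ∀ w : Equiv.Perm (Fin (M + 1)),
      (Finset.univ : Finset (Fin (M + 1) × Fin (M + 1))).card - permLength w ≤ n → P w := by
    intro n
    induction n with
    | zero =>
      intro w hw
      by_cases h : ∀ j, rdesc j w
      · rw [eq_omega_of_rdesc w h]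
        exact h0
      · push Not at h
        obtain ⟨j, hj⟩ := h
        have hj' := (rdesc_or j w).resolve_left hj
        have := permLength_rdesc j _ hj'
        rw [mul_adj_adj] at this
        have := hb (w * adj j)
        omega
    | succ n ih =>
      intro w hw
      by_cases h : ∀ j, rdesc j w
      · rw [eq_omega_of_rdesc w h]
        exact h0
      · push Not at h
        obtain ⟨j, hj⟩ := h
        have hj' := (rdesc_or j w).resolve_left hj
        have h1 := permLength_rdesc j _ hj'
        have h2 := hs _ j hj' (ih (w * adj j) (by rw [mul_adj_adj] at h1; omega))
        rwa [mul_adj_adj] at h2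
  exact fun w => key _ w le_rfl

lemma perm_induction_left {M : ℕ} {P : Equiv.Perm (Fin (M + 1)) → Prop}
    (h0 : P (omegaPerm (M + 1)))
    (hs : ∀ w j, ldesc j w → P w → P (adj j * w)) : ∀ w, P w := by
  intro w
  have := perm_induction (P := fun w => P w⁻¹) (by rwa [omegaPerm_inv]) (by
    intro w j h hw
    rw [mul_inv_rev, adj_inv]
    exact hs _ _ (by rw [ldesc_inv, inv_inv]; exact h) hw) w⁻¹
  simpa using this

/-! ### Divided differences on functions on the symmetric group -/

/-- The β-divided difference on functions on the orbit of `X`. -/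
def dd [Field F] {M : ℕ} (β : F) (X : Fin (M + 1) → F) (j : Fin M)
    (φ : Equiv.Perm (Fin (M + 1)) → F) : Equiv.Perm (Fin (M + 1)) → F := fun u =>
  ((1 + β * X (u j.succ)) * φ u - (1 + β * X (u j.castSucc)) * φ (u * adj j)) /
    (X (u j.castSucc) - X (u j.succ))

lemma sub_ne [Field F] {M : ℕ} {X : Fin (M + 1) → F} (hX : Function.Injective X)
    (u : Equiv.Perm (Fin (M + 1))) {a b : Fin (M + 1)} (h : a ≠ b) : X (u a) - X (u b) ≠ 0 :=
  sub_ne_zero.2 fun e => h (u.injective (hX e))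

lemma cast_ne_succ {M : ℕ} (j : Fin M) : j.castSucc ≠ j.succ := (Fin.castSucc_lt_succ).ne

lemma dd_dd [Field F] {M : ℕ} (β : F) {X : Fin (M + 1) → F} (hX : Function.Injective X)
    (j : Fin M) (φ : Equiv.Perm (Fin (M + 1)) → F) (u : Equiv.Perm (Fin (M + 1))) :
    dd β X j (dd β X j φ) u = - β * dd β X j φ u := by
  have h1 := sub_ne hX u (cast_ne_succ j)
  have h2 := sub_ne hX u (cast_ne_succ j).symm
  unfold dd
  rw [mul_adj_adj]
  simp only [Equiv.Perm.mul_apply, adj_cast, adj_succ]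
  generalize X (u j.castSucc) = a at *
  generalize X (u j.succ) = b at *
  field_simp
  ring

/-- ddbar on the orbit -/
def tb [Field F] {M : ℕ} (β : F) (X : Fin (M + 1) → F) (j : Fin M)
    (φ : Equiv.Perm (Fin (M + 1)) → F) : Equiv.Perm (Fin (M + 1)) → F := fun u =>
  (1 + β * X (u j.castSucc)) * (φ u - φ (u * adj j)) / (X (u j.castSucc) - X (u j.succ))

lemma tb_comm [Field F] {M : ℕ} (β : F) {X : Fin (M + 1) → F}
    (i j : Fin M) (hij : (i : ℕ) + 1 < j) (φ : Equiv.Perm (Fin (M + 1)) → F) :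
    tb β X i (tb β X j φ) = tb β X j (tb β X i φ) := by
  ext u
  have e1 : adj i j.castSucc = j.castSucc := adj_ne _ _
    (by simp [Fin.ext_iff]; omega) (by simp [Fin.ext_iff]; omega)
  have e2 : adj i j.succ = j.succ := adj_ne _ _
    (by simp [Fin.ext_iff]; omega) (by simp [Fin.ext_iff]; omega)
  have e3 : adj j i.castSucc = i.castSucc := adj_ne _ _
    (by simp [Fin.ext_iff]; omega) (by simp [Fin.ext_iff]; omega)
  have e4 : adj j i.succ = i.succ := adj_ne _ _
    (by simp [Fin.ext_iff]; omega) (by simp [Fin.ext_iff]; omega)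
  have e5 : u * adj i * adj j = u * adj j * adj i := by
    rw [mul_assoc, mul_assoc]
    congr 1
    apply Equiv.Perm.Disjoint.commute
    intro a
    by_cases h : a = i.castSucc ∨ a = i.succ
    · right
      rcases h with rfl | rfl
      · exact e3
      · exact e4
    · push Not at h
      exact Or.inl (adj_ne _ _ h.1 h.2)
  unfold tb
  simp only [Equiv.Perm.mul_apply, e1, e2, e3, e4, e5]
  ring

lemma braid_perm {M : ℕ} (i j : Fin M) (hij : i.succ = j.castSucc) :
    adj i * adj j * adj i = adj j * adj i * adj j := by
  unfold adj
  rw [← hij]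
  have h1 : i.castSucc ≠ i.succ := cast_ne_succ i
  have h2 : i.succ ≠ j.succ := by rw [hij]; exact cast_ne_succ j
  have h3 : i.castSucc ≠ j.succ := by
    simp [Fin.ext_iff] at hij ⊢; omega
  generalize i.castSucc = a at *
  generalize i.succ = b at *
  generalize j.succ = c at *
  rw [Equiv.swap_mul_swap_mul_swap h1 h3, Equiv.swap_comm b c, Equiv.swap_comm a b,
    Equiv.swap_mul_swap_mul_swap h2.symm h3.symm, Equiv.swap_comm]

lemma tb_braid [Field F] {M : ℕ} (β : F) {X : Fin (M + 1) → F} (hX : Function.Injective X)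
    (i j : Fin M) (hij : i.succ = j.castSucc) (φ : Equiv.Perm (Fin (M + 1)) → F) :
    tb β X i (tb β X j (tb β X i φ)) = tb β X j (tb β X i (tb β X j φ)) := by
  ext u
  have h3 : i.castSucc ≠ j.succ := by
    simp [Fin.ext_iff] at hij ⊢; omega
  have h2 : j.castSucc ≠ j.succ := cast_ne_succ j
  have h1 : i.castSucc ≠ j.castSucc := by rw [← hij]; exact cast_ne_succ i
  have e1 : adj i j.castSucc = i.castSucc := by rw [← hij, adj_succ]
  have e2 : adj i j.succ = j.succ := adj_ne _ _ h3.symm (by rw [hij]; exact h2.symm)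
  have e3 : adj j i.castSucc = i.castSucc := adj_ne _ _ h1 h3
  have e4 : adj i i.castSucc = j.castSucc := by rw [adj_cast, hij]
  have e5 : u * adj i * adj j * adj i = u * adj j * adj i * adj j := by
    have := congrArg (u * ·) (braid_perm i j hij)
    simpa only [mul_assoc] using this
  have n1 := sub_ne hX u h1
  have n2 := sub_ne hX u h2
  have n3 := sub_ne hX u h3
  have n1' := sub_ne hX u h1.symm
  have n2' := sub_ne hX u h2.symm
  have n3' := sub_ne hX u h3.symm
  unfold tb
  simp only [Equiv.Perm.mul_apply, e1, e2, e3, e4, e5, hij, adj_cast, adj_succ, mul_adj_adj]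
  generalize X (u i.castSucc) = a at *
  generalize X (u j.castSucc) = b at *
  generalize X (u j.succ) = c at *
  generalize φ u = f1
  generalize φ (u * adj i) = f2
  generalize φ (u * adj j) = f3
  generalize φ (u * adj i * adj j) = f4
  generalize φ (u * adj j * adj i) = f5
  generalize φ (u * adj j * adj i * adj j) = f6
  field_simp
  ring

/-- An auxiliary family indexed by permutations, built by left multiplication with fuel. -/
def bfam [Field F] {M : ℕ} (β : F) (X : Fin (M + 1) → F) (φ : Equiv.Perm (Fin (M + 1)) → F) :
    ℕ → Equiv.Perm (Fin (M + 1)) → Equiv.Perm (Fin (M + 1)) → F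
  | 0, _ => φ
  | n + 1, w =>
    open Classical in
    if h : ∃ i : Fin M, ldesc i w then
      tb β X h.choose (bfam β X φ n (adj h.choose * w))
    else φ

lemma bfam_spec [Field F] {M : ℕ} (β : F) {X : Fin (M + 1) → F} (hX : Function.Injective X)
    (φ : Equiv.Perm (Fin (M + 1)) → F) : ∀ n, ∀ (w : Equiv.Perm (Fin (M + 1))) (i : Fin M),
    permLength w = n + 1 → ldesc i w →
      bfam β X φ (n + 1) w = tb β X i (bfam β X φ n (adj i * w)) := by
  intro n
  induction n using Nat.strong_induction_on with
  | _ n ih =>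
  intro w i hw hi
  -- the two rank-two cases
  have far : ∀ i j : Fin M, (i : ℕ) + 1 < j → ldesc i w → ldesc j w →
      tb β X i (bfam β X φ n (adj i * w)) = tb β X j (bfam β X φ n (adj j * w)) := by
    intro i j hij hi hj
    have e1 : adj i j.castSucc = j.castSucc := adj_ne _ _
      (by simp [Fin.ext_iff]; omega) (by simp [Fin.ext_iff]; omega)
    have e2 : adj i j.succ = j.succ := adj_ne _ _
      (by simp [Fin.ext_iff]; omega) (by simp [Fin.ext_iff]; omega)
    have e3 : adj j i.castSucc = i.castSucc := adj_ne _ _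
      (by simp [Fin.ext_iff]; omega) (by simp [Fin.ext_iff]; omega)
    have e4 : adj j i.succ = i.succ := adj_ne _ _
      (by simp [Fin.ext_iff]; omega) (by simp [Fin.ext_iff]; omega)
    have hc : adj i * (adj j * w) = adj j * (adj i * w) := by
      rw [← mul_assoc, ← mul_assoc]
      congr 1
      apply Equiv.Perm.Disjoint.commute
      intro a
      by_cases h : a = i.castSucc ∨ a = i.succ
      · right
        rcases h with rfl | rfl
        · exact e3
        · exact e4
      · push Not at h
        exact Or.inl (adj_ne _ _ h.1 h.2)
    have hj' : ldesc j (adj i * w) := by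
      unfold ldesc at hj ⊢
      rw [mul_inv_rev, adj_inv, Equiv.Perm.mul_apply, Equiv.Perm.mul_apply, e1, e2]
      exact hj
    have hi' : ldesc i (adj j * w) := by
      unfold ldesc at hi ⊢
      rw [mul_inv_rev, adj_inv, Equiv.Perm.mul_apply, Equiv.Perm.mul_apply, e3, e4]
      exact hi
    have l1 := permLength_ldesc _ _ hi
    have l2 := permLength_ldesc _ _ hj
    have l3 := permLength_ldesc _ _ hj'
    obtain ⟨m, rfl⟩ : ∃ m, n = m + 1 := ⟨n - 1, by omega⟩
    rw [ih m (by omega) (adj i * w) j (by omega) hj', ih m (by omega) (adj j * w) i (by omega) hi',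
      tb_comm β i j hij, hc]
  have near : ∀ i j : Fin M, i.succ = j.castSucc → ldesc i w → ldesc j w →
      tb β X i (bfam β X φ n (adj i * w)) = tb β X j (bfam β X φ n (adj j * w)) := by
    intro i j hij hi hj
    have h3 : i.castSucc ≠ j.succ := by
      simp [Fin.ext_iff] at hij ⊢; omega
    have h2 : j.castSucc ≠ j.succ := cast_ne_succ j
    have h1 : i.castSucc ≠ j.castSucc := by rw [← hij]; exact cast_ne_succ i
    have e1 : adj i j.castSucc = i.castSucc := by rw [← hij, adj_succ]
    have e2 : adj i j.succ = j.succ := adj_ne _ _ h3.symm (by rw [hij]; exact h2.symm)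
    have e3 : adj j i.castSucc = i.castSucc := adj_ne _ _ h1 h3
    have e4 : adj i i.castSucc = j.castSucc := by rw [adj_cast, hij]
    have a1 : ldesc j (adj i * w) := by
      unfold ldesc at hi hj ⊢
      rw [mul_inv_rev, adj_inv, Equiv.Perm.mul_apply, Equiv.Perm.mul_apply, e1, e2]
      rw [hij] at hi
      exact hj.trans hi
    have a2 : ldesc i (adj j * (adj i * w)) := by
      unfold ldesc at hi hj ⊢
      rw [mul_inv_rev, mul_inv_rev, adj_inv, adj_inv]
      simp only [Equiv.Perm.mul_apply, hij, adj_cast, e2, e3, e4]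
      exact hj
    have b1 : ldesc i (adj j * w) := by
      unfold ldesc at hi hj ⊢
      rw [mul_inv_rev, adj_inv, Equiv.Perm.mul_apply, Equiv.Perm.mul_apply, e3, hij, adj_cast]
      rw [hij] at hi
      exact hj.trans hi
    have b2 : ldesc j (adj i * (adj j * w)) := by
      unfold ldesc at hi hj ⊢
      rw [mul_inv_rev, mul_inv_rev, adj_inv, adj_inv]
      simp only [Equiv.Perm.mul_apply, adj_succ, e1, e2, e3]
      rw [hij] at hi
      exact hi
    have hc : adj i * (adj j * (adj i * w)) = adj j * (adj i * (adj j * w)) := by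
      have := congrArg (· * w) (braid_perm i j hij)
      simpa only [mul_assoc] using this
    have l1 := permLength_ldesc _ _ hi
    have l2 := permLength_ldesc _ _ hj
    have l3 := permLength_ldesc _ _ a1
    have l4 := permLength_ldesc _ _ a2
    have l5 := permLength_ldesc _ _ b1
    have l6 := permLength_ldesc _ _ b2
    obtain ⟨m, rfl⟩ : ∃ m, n = m + 2 := ⟨n - 2, by omega⟩
    rw [ih (m + 1) (by omega) (adj i * w) j (by omega) a1,
      ih m (by omega) _ i (by omega) a2,
      ih (m + 1) (by omega) (adj j * w) i (by omega) b1,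
      ih m (by omega) _ j (by omega) b2, hc, tb_braid β hX i j hij]
  have all : ∀ i j : Fin M, ldesc i w → ldesc j w →
      tb β X i (bfam β X φ n (adj i * w)) = tb β X j (bfam β X φ n (adj j * w)) := by
    intro i j hi hj
    rcases lt_trichotomy i j with h | h | h
    · by_cases h' : (i : ℕ) + 1 < j
      · exact far i j h' hi hj
      · exact near i j (by rw [Fin.lt_def] at h; rw [Fin.ext_iff, Fin.val_succ, Fin.val_castSucc]; omega) hi hj
    · rw [h]
    · by_cases h' : (j : ℕ) + 1 < i
      · exact (far j i h' hj hi).symm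
      · exact (near j i (by rw [Fin.lt_def] at h; rw [Fin.ext_iff, Fin.val_succ, Fin.val_castSucc]; omega) hj hi).symm
  have hex : ∃ i : Fin M, ldesc i w := ⟨i, hi⟩
  have : bfam β X φ (n + 1) w
      = tb β X hex.choose (bfam β X φ n (adj hex.choose * w)) := by
    rw [bfam, dif_pos hex]
  rw [this]
  exact all _ _ hex.choose_spec hi

lemma permLength_adj_mul_le {M : ℕ} (j : Fin M) (w : Equiv.Perm (Fin (M + 1))) :
    permLength (adj j * w) ≤ permLength w + 1 := by
  have := permLength_mul_adj_le j w⁻¹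
  rwa [← permLength_inv (adj j * w), mul_inv_rev, adj_inv, ← permLength_inv w]

lemma permLength_word {M : ℕ} (L : List (Fin M)) :
    permLength (L.map adj).prod ≤ L.length := by
  induction L with
  | nil => simp [permLength_one]
  | cons a L ih =>
    rw [List.map_cons, List.prod_cons, List.length_cons]
    exact (permLength_adj_mul_le _ _).trans (by omega)

lemma foldr_eq_bfam [Field F] {M : ℕ} (β : F) {X : Fin (M + 1) → F} (hX : Function.Injective X)
    (φ : Equiv.Perm (Fin (M + 1)) → F) (L : List (Fin M)) :
    L.length = permLength (L.map adj).prod →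
    L.foldr (tb β X) φ = bfam β X φ L.length (L.map adj).prod := by
  induction L with
  | nil => intro _; rfl
  | cons a L ih =>
    intro h
    rw [List.map_cons, List.prod_cons, List.length_cons] at h ⊢
    have h1 := permLength_word L
    have h2 := permLength_adj_mul_le a (L.map adj).prod
    have hd : ldesc a (adj a * (L.map adj).prod) := by
      rcases ldesc_or a (L.map adj).prod with h' | h'
      · have := permLength_ldesc _ _ h'
        omega
      · exact h'
    rw [List.foldr_cons, ih (by omega), bfam_spec β hX φ _ _ a h.symm hd, adj_adj_mul]

lemma ddbar_eq [Field F] {M : ℕ} (β : F) {X : Fin (M + 1) → F} (hX : Function.Injective X)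
    (i : Fin M) (f : (Fin (M + 1) → F) → F) (u : Equiv.Perm (Fin (M + 1))) :
    ddbar β i f (X ∘ u) = tb β X i (fun u => f (X ∘ u)) u := by
  have h := sub_ne hX u (cast_ne_succ i)
  unfold ddbar tb
  have : (fun j => (X ∘ u) (Equiv.swap i.castSucc i.succ j)) = X ∘ (u * adj i) := rfl
  rw [this]
  simp only [Function.comp_apply]
  field_simp
  ring

lemma ddbarWord_eq [Field F] {M : ℕ} (β : F) {X : Fin (M + 1) → F} (hX : Function.Injective X)
    (L : List (Fin M)) (f : (Fin (M + 1) → F) → F) (u : Equiv.Perm (Fin (M + 1))) :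
    ddbarWord β L f (X ∘ u) = L.foldr (tb β X) (fun u => f (X ∘ u)) u := by
  unfold ddbarWord
  induction L generalizing u with
  | nil => rfl
  | cons a L ih =>
    rw [List.foldr_cons, List.foldr_cons, ddbar_eq β hX]
    congr 1
    funext v
    exact ih v

/-! ### Grothendieck families -/

lemma groth_rdesc [Field F] {M : ℕ} {β : F}
    {G : Equiv.Perm (Fin (M + 1)) → (Fin (M + 1) → F) → (Fin (M + 1) → F) → F}
    (hG : IsGroth M β G) {X : Fin (M + 1) → F} (hX : Function.Injective X)
    (w : Equiv.Perm (Fin (M + 1))) (j : Fin M) (h : rdesc j w) (y : Fin (M + 1) → F)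
    (u : Equiv.Perm (Fin (M + 1))) :
    G (w * adj j) (X ∘ u) y = dd β X j (fun u => G w (X ∘ u) y) u :=
  hG.2 w j (X ∘ u) y (permLength_rdesc j w h)
    (fun e => cast_ne_succ j (u.injective (hX e)))

lemma groth_ylast [Field F] {M : ℕ} {β : F}
    {G : Equiv.Perm (Fin (M + 1)) → (Fin (M + 1) → F) → (Fin (M + 1) → F) → F}
    (hG : IsGroth M β G) {X : Fin (M + 1) → F} (hX : Function.Injective X)
    (y y' : Fin (M + 1) → F) (hy : ∀ i : Fin M, y i.castSucc = y' i.castSucc)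
    (w : Equiv.Perm (Fin (M + 1))) :
    ∀ u : Equiv.Perm (Fin (M + 1)), G w (X ∘ u) y = G w (X ∘ u) y' := by
  refine perm_induction (P := fun w => ∀ u : Equiv.Perm (Fin (M + 1)),
    G w (X ∘ u) y = G w (X ∘ u) y') ?_ ?_ w
  · intro u
    rw [hG.1, hG.1]
    refine Finset.prod_congr rfl ?_
    intro p hp
    simp only [Finset.mem_filter, Finset.mem_univ, true_and] at hp
    have : y p.2 = y' p.2 := hy ⟨p.2, by omega⟩
    rw [this]
  · intro w j h ih u
    rw [groth_rdesc hG hX w j h, groth_rdesc hG hX w j h]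
    unfold dd
    simp only [ih]

/-- The key symmetric factorisation of the top polynomial. -/
lemma groth_omega_base [Field F] {M : ℕ} {β : F}
    {G : Equiv.Perm (Fin (M + 1)) → (Fin (M + 1) → F) → (Fin (M + 1) → F) → F}
    (hG : IsGroth M β G) {X Y : Fin (M + 1) → F} (hX : Function.Injective X)
    (hY : Function.Injective Y) (k i : Fin M) (hki : (k : ℕ) + i + 1 = M)
    (u v : Equiv.Perm (Fin (M + 1))) :
    dd β X k (fun u => G (omegaPerm (M + 1)) (X ∘ u) (Y ∘ v)) u =
      dd β Y i (fun v => G (omegaPerm (M + 1)) (X ∘ u) (Y ∘ v)) v := by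
  set S := (Finset.univ.filter
    (fun p : Fin (M + 1) × Fin (M + 1) => (p.1 : ℕ) + (p.2 : ℕ) + 2 ≤ M + 1)) with hS
  set T := S.erase (k.castSucc, i.castSucc) with hT
  have hmem : (k.castSucc, i.castSucc) ∈ S := by simp [hS]; omega
  have hfac : ∀ x y : Fin (M + 1) → F, G (omegaPerm (M + 1)) x y =
      (x k.castSucc + y i.castSucc + β * x k.castSucc * y i.castSucc) *
      ∏ p ∈ T, (x p.1 + y p.2 + β * x p.1 * y p.2) := by
    intro x y
    rw [hG.1, hT, ← Finset.mul_prod_erase S _ hmem]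
  have hmemT : ∀ p : Fin (M + 1) × Fin (M + 1), p ∈ T ↔
      ((p.1 : ℕ) + p.2 + 1 ≤ M ∧ ¬ ((p.1 : ℕ) = k ∧ (p.2 : ℕ) = i)) := by
    intro p
    simp only [hT, hS, Finset.mem_erase, Finset.mem_filter, Finset.mem_univ, true_and, ne_eq,
      Prod.ext_iff, Fin.ext_iff, Fin.val_castSucc]
    omega
  have hx : ∀ (x y : Fin (M + 1) → F),
      ∏ p ∈ T, (x (adj k p.1) + y p.2 + β * x (adj k p.1) * y p.2) =
      ∏ p ∈ T, (x p.1 + y p.2 + β * x p.1 * y p.2) := by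
    intro x y
    refine Finset.prod_nbij' (fun p => (adj k p.1, p.2)) (fun p => (adj k p.1, p.2)) ?_ ?_ ?_ ?_ ?_
    case refine_3 => intro p _; simp [adj_adj_apply]
    case refine_4 => intro p _; simp [adj_adj_apply]
    case refine_5 => intro p _; rfl
    all_goals
      intro p hp
      rw [hmemT] at hp ⊢
      unfold adj
      rw [Equiv.swap_apply_def]
      simp only [Fin.ext_iff, Fin.val_castSucc, Fin.val_succ]
      split_ifs <;> (try simp only [Fin.val_castSucc, Fin.val_succ]) <;> omega
  have hy : ∀ (x y : Fin (M + 1) → F),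
      ∏ p ∈ T, (x p.1 + y (adj i p.2) + β * x p.1 * y (adj i p.2)) =
      ∏ p ∈ T, (x p.1 + y p.2 + β * x p.1 * y p.2) := by
    intro x y
    refine Finset.prod_nbij' (fun p => (p.1, adj i p.2)) (fun p => (p.1, adj i p.2)) ?_ ?_ ?_ ?_ ?_
    case refine_3 => intro p _; simp [adj_adj_apply]
    case refine_4 => intro p _; simp [adj_adj_apply]
    case refine_5 => intro p _; rfl
    all_goals
      intro p hp
      rw [hmemT] at hp ⊢
      unfold adj
      rw [Equiv.swap_apply_def]
      simp only [Fin.ext_iff, Fin.val_castSucc, Fin.val_succ]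
      split_ifs <;> (try simp only [Fin.val_castSucc, Fin.val_succ]) <;> omega
  have n1 := sub_ne hX u (cast_ne_succ k)
  have n2 := sub_ne hY v (cast_ne_succ i)
  have hx' := hx (X ∘ u) (Y ∘ v)
  have hy' := hy (X ∘ u) (Y ∘ v)
  unfold dd
  simp only [hfac]
  simp only [Function.comp_apply, Equiv.Perm.mul_apply, adj_cast] at hx' hy' ⊢
  rw [hx', hy']
  generalize (∏ p ∈ T, (X (u p.1) + Y (v p.2) + β * X (u p.1) * Y (v p.2))) = R
  generalize X (u k.castSucc) = a at *
  generalize X (u k.succ) = b at *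
  generalize Y (v i.castSucc) = c at *
  generalize Y (v i.succ) = d at *
  field_simp
  ring

lemma dd_comm [Field F] {M : ℕ} (β : F) (X Y : Fin (M + 1) → F) (k i : Fin M)
    (g : Equiv.Perm (Fin (M + 1)) → Equiv.Perm (Fin (M + 1)) → F)
    (u v : Equiv.Perm (Fin (M + 1))) :
    dd β X k (fun u => dd β Y i (fun v => g u v) v) u =
      dd β Y i (fun v => dd β X k (fun u => g u v) u) v := by
  unfold dd
  ring

lemma groth_left [Field F] {M : ℕ} {β : F}
    {G : Equiv.Perm (Fin (M + 1)) → (Fin (M + 1) → F) → (Fin (M + 1) → F) → F}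
    (hG : IsGroth M β G) {X Y : Fin (M + 1) → F} (hX : Function.Injective X)
    (hY : Function.Injective Y) (w : Equiv.Perm (Fin (M + 1))) :
    ∀ i : Fin M, (ldesc i w → ∀ u v : Equiv.Perm (Fin (M + 1)),
        dd β Y i (fun v => G w (X ∘ u) (Y ∘ v)) v = G (adj i * w) (X ∘ u) (Y ∘ v)) ∧
      (¬ ldesc i w → ∀ u v : Equiv.Perm (Fin (M + 1)),
        dd β Y i (fun v => G w (X ∘ u) (Y ∘ v)) v = - β * G w (X ∘ u) (Y ∘ v)) := by
  refine perm_induction (P := fun w => ∀ i : Fin M, (ldesc i w → ∀ u v : Equiv.Perm (Fin (M + 1)),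
        dd β Y i (fun v => G w (X ∘ u) (Y ∘ v)) v = G (adj i * w) (X ∘ u) (Y ∘ v)) ∧
      (¬ ldesc i w → ∀ u v : Equiv.Perm (Fin (M + 1)),
        dd β Y i (fun v => G w (X ∘ u) (Y ∘ v)) v = - β * G w (X ∘ u) (Y ∘ v))) ?_ ?_ w
  · intro i
    have hd : ∀ j : Fin M, rdesc j (omegaPerm (M + 1)) := by
      intro j
      unfold rdesc
      rw [omegaPerm_apply, omegaPerm_apply, Fin.rev_lt_rev]
      exact Fin.castSucc_lt_succ
    refine ⟨fun _ u v => ?_, fun h => absurd (hd i) h⟩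
    have e : adj i * omegaPerm (M + 1) = omegaPerm (M + 1) * adj i.rev := by
      ext a
      simp only [Equiv.Perm.mul_apply, omegaPerm_apply]
      unfold adj
      rw [Equiv.swap_apply_def, Equiv.swap_apply_def]
      simp only [Fin.ext_iff, Fin.val_castSucc, Fin.val_succ, Fin.val_rev]
      split_ifs <;> simp only [Fin.val_castSucc, Fin.val_succ, Fin.val_rev] <;> omega
    rw [e, groth_rdesc hG hX _ _ (hd _),
      groth_omega_base hG hX hY i.rev i (by simp only [Fin.val_rev]; omega)]
  · intro w j hj ih i
    by_cases hsp : w⁻¹ i.succ = j.castSucc ∧ w⁻¹ i.castSucc = j.succ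
    · -- special case
      have hw : ldesc i w := by
        unfold ldesc
        rw [hsp.1, hsp.2]
        exact Fin.castSucc_lt_succ
      have e : adj i * w = w * adj j := by
        have h1 : i.succ = w j.castSucc := by rw [← hsp.1]; simp
        have h2 : i.castSucc = w j.succ := by rw [← hsp.2]; simp
        unfold adj
        rw [h1, h2, Equiv.mul_swap_eq_swap_mul, Equiv.swap_comm]
      have hn : ¬ ldesc i (w * adj j) := by
        unfold ldesc
        rw [mul_inv_rev, adj_inv, Equiv.Perm.mul_apply, Equiv.Perm.mul_apply, hsp.1, hsp.2,
          adj_cast, adj_succ]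
        exact not_lt.2 Fin.castSucc_lt_succ.le
      refine ⟨fun h => absurd h hn, fun _ u v => ?_⟩
      have h1 := (ih i).1 hw
      rw [e] at h1
      have h2 := dd_dd β hY i (fun v => G w (X ∘ u) (Y ∘ v)) v
      have h3 : dd β Y i (fun v => G w (X ∘ u) (Y ∘ v))
          = fun v : Equiv.Perm (Fin (M + 1)) => G (w * adj j) (X ∘ u) (Y ∘ v) := funext fun v => h1 u v
      rw [h3] at h2
      exact h2
    · have hsp2 : ¬ (w⁻¹ i.succ = j.succ ∧ w⁻¹ i.castSucc = j.castSucc) := by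
        rintro ⟨h1, h2⟩
        have h1 : i.succ = w j.succ := by rw [← h1]; simp
        have h2 : i.castSucc = w j.castSucc := by rw [← h2]; simp
        unfold rdesc at hj
        rw [← h1, ← h2] at hj
        exact absurd hj (not_lt.2 Fin.castSucc_lt_succ.le)
      have hiff : ldesc i (w * adj j) ↔ ldesc i w := by
        unfold ldesc
        rw [mul_inv_rev, adj_inv, Equiv.Perm.mul_apply, Equiv.Perm.mul_apply]
        exact adj_lt j _ _ hsp hsp2
      have hGr : ∀ u v : Equiv.Perm (Fin (M + 1)),
          dd β Y i (fun v => G (w * adj j) (X ∘ u) (Y ∘ v)) v =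
          dd β X j (fun u => dd β Y i (fun v => G w (X ∘ u) (Y ∘ v)) v) u := by
        intro u v
        rw [dd_comm]
        congr 1
        funext v
        exact groth_rdesc hG hX w j hj _ u
      rw [hiff]
      refine ⟨fun h u v => ?_, fun h u v => ?_⟩
      · rw [hGr]
        have := (ih i).1 h
        simp only [this]
        rw [← mul_assoc, groth_rdesc hG hX]
        unfold rdesc at hj ⊢
        rw [Equiv.Perm.mul_apply, Equiv.Perm.mul_apply, adj_lt]
        · exact hj
        · rintro ⟨h1, h2⟩
          exact hsp ⟨by rw [← h2]; simp, by rw [← h1]; simp⟩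
        · rintro ⟨h1, h2⟩
          exact hsp2 ⟨by rw [← h1]; simp, by rw [← h2]; simp⟩
      · rw [hGr]
        have := (ih i).2 h
        simp only [this]
        rw [groth_rdesc hG hX w j hj]
        unfold dd
        ring

lemma groth_xlast [Field F] {M : ℕ} {β : F}
    {G : Equiv.Perm (Fin (M + 1)) → (Fin (M + 1) → F) → (Fin (M + 1) → F) → F}
    (hG : IsGroth M β G) {X X' Y : Fin (M + 1) → F} (hX : Function.Injective X)
    (hX' : Function.Injective X') (hY : Function.Injective Y)
    (hx : ∀ i : Fin M, X i.castSucc = X' i.castSucc)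
    (w : Equiv.Perm (Fin (M + 1))) :
    ∀ v : Equiv.Perm (Fin (M + 1)), G w X (Y ∘ v) = G w X' (Y ∘ v) := by
  refine perm_induction_left (P := fun w => ∀ v : Equiv.Perm (Fin (M + 1)),
    G w X (Y ∘ v) = G w X' (Y ∘ v)) ?_ ?_ w
  · intro v
    rw [hG.1, hG.1]
    refine Finset.prod_congr rfl ?_
    intro p hp
    simp only [Finset.mem_filter, Finset.mem_univ, true_and] at hp
    have : X p.1 = X' p.1 := hx ⟨p.1, by omega⟩
    rw [this]
  · intro w j h ih v
    have h1 := (groth_left hG hX hY w j).1 h 1 v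
    have h2 := (groth_left hG hX' hY w j).1 h 1 v
    refine h1.symm.trans (Eq.trans ?_ h2)
    congr 1
    funext v
    exact ih v

lemma negOm_comp_injective [Field F] {M : ℕ} {β : F} {X : Fin (M + 1) → F}
    (hX : Function.Injective X) (h1 : ∀ i, 1 + β * X i ≠ 0) :
    Function.Injective (fun i => negOm β (X i)) := by
  intro a b h
  apply hX
  simp only [negOm] at h
  rw [div_eq_div_iff (h1 a) (h1 b)] at h
  linear_combination -h

lemma negOm_mul [Field F] {β b : F} (h : 1 + β * b ≠ 0) : negOm β b * (1 + β * b) = -b :=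
  div_mul_cancel₀ _ h

lemma oplus_negOm [Field F] {β a b : F} (h : 1 + β * b ≠ 0) :
    a + negOm β b + β * a * negOm β b = (a - b) / (1 + β * b) := by
  rw [eq_div_iff h]
  linear_combination (1 + β * a) * negOm_mul h

lemma groth_vanish [Field F] {M : ℕ} {β : F}
    {G : Equiv.Perm (Fin (M + 1)) → (Fin (M + 1) → F) → (Fin (M + 1) → F) → F}
    (hG : IsGroth M β G) {X : Fin (M + 1) → F} (hX : Function.Injective X)
    (h1 : ∀ i, 1 + β * X i ≠ 0) (w : Equiv.Perm (Fin (M + 1))) :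
    ∀ u : Equiv.Perm (Fin (M + 1)), u ≠ w → permLength u ≤ permLength w →
      G w (X ∘ u) (fun i => negOm β (X i)) = 0 := by
  refine perm_induction (P := fun w => ∀ u : Equiv.Perm (Fin (M + 1)), u ≠ w →
    permLength u ≤ permLength w → G w (X ∘ u) (fun i => negOm β (X i)) = 0) ?_ ?_ w
  · intro u hu _
    have : ∃ i, u i < i.rev := by
      by_contra hc
      push Not at hc
      exact hu (eq_omega_of_le u hc)
    obtain ⟨i, hi⟩ := this
    rw [hG.1]
    refine Finset.prod_eq_zero (i := (i, u i)) ?_ ?_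
    · simp only [Finset.mem_filter, Finset.mem_univ, true_and]
      rw [Fin.lt_def, Fin.val_rev] at hi
      omega
    · have := h1 (u i)
      simp only [Function.comp_apply]
      rw [oplus_negOm this, sub_self, zero_div]
  · intro w j hj ih u hu hl
    have hl' := permLength_rdesc j w hj
    have hl2 := permLength_mul_adj_le j u
    rw [groth_rdesc hG hX w j hj]
    unfold dd
    beta_reduce
    rw [ih u (by rintro rfl; omega) (by omega), ih (u * adj j) (by
      rintro rfl
      exact hu (mul_adj_adj u j).symm) (by omega)]
    simp

lemma groth_diag [Field F] {M : ℕ} {β : F}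
    {G : Equiv.Perm (Fin (M + 1)) → (Fin (M + 1) → F) → (Fin (M + 1) → F) → F}
    (hG : IsGroth M β G) {X : Fin (M + 1) → F} (hX : Function.Injective X)
    (h1 : ∀ i, 1 + β * X i ≠ 0) (w : Equiv.Perm (Fin (M + 1))) :
    G w (X ∘ w) (fun i => negOm β (X i)) =
      ∏ p ∈ vinv w, (X p.2 - X p.1) / (1 + β * X p.1) := by
  refine perm_induction (P := fun w : Equiv.Perm (Fin (M + 1)) =>
    G w (X ∘ w) (fun i => negOm β (X i)) =
      ∏ p ∈ vinv w, (X p.2 - X p.1) / (1 + β * X p.1)) ?_ ?_ w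
  · rw [hG.1]
    refine Finset.prod_nbij' (fun p => (p.2, p.1.rev)) (fun p => (p.2.rev, p.1)) ?_ ?_ ?_ ?_ ?_
    · intro p hp
      simp only [Finset.mem_filter, Finset.mem_univ, true_and, vinv, omegaPerm_inv,
        omegaPerm_apply, Fin.lt_def, Fin.val_rev] at hp ⊢
      omega
    · intro p hp
      simp only [Finset.mem_filter, Finset.mem_univ, true_and, vinv, omegaPerm_inv,
        omegaPerm_apply, Fin.lt_def, Fin.val_rev] at hp ⊢
      omega
    · intro p _; simp
    · intro p _; simp
    · intro p _
      have := h1 p.2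
      simp only [Function.comp_apply, omegaPerm_apply]
      rw [oplus_negOm this]
  · intro w j hj ih
    have hl := permLength_rdesc j w hj
    rw [groth_rdesc hG hX w j hj]
    unfold dd
    beta_reduce
    rw [groth_vanish hG hX h1 w (w * adj j) (by intro h; rw [h] at hl; omega) (by omega),
      mul_adj_adj, ih, vinv_insert j w hj, Finset.prod_insert (vinv_notMem j w)]
    simp only [Equiv.Perm.mul_apply, adj_cast, adj_succ]
    have n1 := sub_ne hX w (cast_ne_succ j)
    have n2 := sub_ne hX w (cast_ne_succ j).symm
    have n3 := h1 (w j.succ)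
    field_simp
    ring

lemma reduction_core [Field F] [CharZero F] {M : ℕ} {β : F}
    {G : Equiv.Perm (Fin (M + 1)) → (Fin (M + 1) → F) → (Fin (M + 1) → F) → F}
    (hG : IsGroth M β G) {X : Fin (M + 1) → F} (hX : Function.Injective X)
    (h1 : ∀ i, 1 + β * X i ≠ 0) (f : (Fin (M + 1) → F) → F) (τ : Equiv.Perm (Fin (M + 1))) :
    ∑ w : Equiv.Perm (Fin (M + 1)), G w X ((fun i => negOm β (X i)) ∘ τ) *
      bfam β X (fun u => f (X ∘ u)) (permLength w) w τ = f X := by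
  set Y : Fin (M + 1) → F := fun i => negOm β (X i) with hYdef
  have hY : Function.Injective Y := negOm_comp_injective hX h1
  set B : Equiv.Perm (Fin (M + 1)) → Equiv.Perm (Fin (M + 1)) → F :=
    fun w => bfam β X (fun u => f (X ∘ u)) (permLength w) w with hB
  set T : Equiv.Perm (Fin (M + 1)) → Equiv.Perm (Fin (M + 1)) → F :=
    fun w v => G w X (Y ∘ v) * B w v with hT
  -- invariance of a pair of summands
  have pair0 : ∀ w (i : Fin M) v, ldesc i w →
      T w (v * adj i) + T (adj i * w) (v * adj i) = T w v + T (adj i * w) v := by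
    intro w i v h
    have hl := permLength_ldesc i w h
    have hBw : B w = tb β X i (B (adj i * w)) := by
      simp only [hB]
      rw [← hl]
      exact bfam_spec β hX _ _ w i hl.symm h
    have hA : ∀ v : Equiv.Perm (Fin (M + 1)), G (adj i * w) X (Y ∘ v) =
        dd β Y i (fun v => G w X (Y ∘ v)) v :=
      fun v => ((groth_left hG hX hY w i).1 h 1 v).symm
    have n1 := sub_ne hX v (cast_ne_succ i)
    have n2 := sub_ne hX v (cast_ne_succ i).symm
    have m1 := h1 (v i.castSucc)
    have m2 := h1 (v i.succ)
    have k1 := sub_ne hY v (cast_ne_succ i)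
    have k2 := sub_ne hY v (cast_ne_succ i).symm
    have hdd : ∀ (a b p q : F), 1 + β * a ≠ 0 → 1 + β * b ≠ 0 → a - b ≠ 0 →
        ((1 + β * negOm β b) * p - (1 + β * negOm β a) * q) / (negOm β a - negOm β b) =
        ((1 + β * a) * p - (1 + β * b) * q) / (b - a) := by
      intro a b p q ha hb hab
      have hba : b - a ≠ 0 := by
        intro h0
        exact hab (by linear_combination -h0)
      have e1 : 1 + β * negOm β a = 1 / (1 + β * a) := by
        unfold negOm; field_simp; ring
      have e2 : 1 + β * negOm β b = 1 / (1 + β * b) := by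
        unfold negOm; field_simp; ring
      have e3 : negOm β a - negOm β b = (b - a) / ((1 + β * a) * (1 + β * b)) := by
        rw [eq_div_iff (mul_ne_zero ha hb)]
        linear_combination (1 + β * b) * negOm_mul ha - (1 + β * a) * negOm_mul hb
      rw [e1, e2, e3]
      field_simp
    simp only [hT, hBw, hA]
    unfold dd tb
    simp only [mul_adj_adj, Equiv.Perm.mul_apply, adj_cast, adj_succ, hYdef]
    rw [hdd _ _ _ _ m1 m2 n1, hdd _ _ _ _ m2 m1 n2]
    generalize X (v i.castSucc) = a at *
    generalize X (v i.succ) = b at *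
    field_simp
    ring
  have pair : ∀ w (i : Fin M) v,
      T w (v * adj i) + T (adj i * w) (v * adj i) = T w v + T (adj i * w) v := by
    intro w i v
    rcases ldesc_or i w with h | h
    · exact pair0 w i v h
    · have := pair0 _ i v h
      rw [adj_adj_mul] at this
      rw [add_comm, this, add_comm]
  have inv : ∀ (i : Fin M) v, ∑ w, T w (v * adj i) = ∑ w, T w v := by
    intro i v
    have e : ∀ v, ∑ w, T (adj i * w) v = ∑ w, T w v :=
      fun v => Equiv.sum_comp (Equiv.mulLeft (adj i)) (fun w => T w v)
    have h2 := Finset.sum_congr (rfl : (Finset.univ : Finset (Equiv.Perm (Fin (M + 1)))) = _)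
      (fun w _ => pair w i v)
    rw [Finset.sum_add_distrib, Finset.sum_add_distrib, e, e, ← two_mul, ← two_mul] at h2
    exact mul_left_cancel₀ two_ne_zero h2
  have const : ∀ v, ∑ w, T w v = ∑ w, T w 1 := by
    intro v
    have hm : v ∈ Submonoid.closure
        (Set.range fun i : Fin M => Equiv.swap i.castSucc i.succ) := by
      rw [Equiv.Perm.mclosure_swap_castSucc_succ]
      trivial
    induction hm using Submonoid.closure_induction_right with
    | one => rfl
    | mul_right v _ y hy ih =>
      obtain ⟨i, rfl⟩ := hy
      exact (inv i v).trans ih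
  have hfin : ∑ w, T w 1 = f X := by
    rw [Finset.sum_eq_single 1]
    · have hd := groth_diag hG hX h1 1
      have hv : vinv (1 : Equiv.Perm (Fin (M + 1))) = ∅ := by
        rw [← Finset.card_eq_zero, card_vinv, permLength_one]
      rw [hv, Finset.prod_empty] at hd
      have hd' : G 1 X (Y ∘ (1 : Equiv.Perm (Fin (M + 1)))) = 1 := hd
      have hB1 : B 1 1 = f X := by
        simp only [hB, permLength_one]
        rfl
      simp only [hT]
      rw [hd', hB1, one_mul]
    · intro w _ hw
      have : G w X (Y ∘ (1 : Equiv.Perm (Fin (M + 1)))) = 0 :=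
        groth_vanish hG hX h1 w 1 hw.symm (by rw [permLength_one]; omega)
      simp only [hT]
      rw [this, zero_mul]
    · intro h
      exact absurd (Finset.mem_univ _) h
  exact (const τ).trans hfin

/-- **Lemma `l7`**: with `n = M+2`, `π ∈ S_n`, `τ` a permutation of `{1,…,n-1}`,
consider `S(σ,x,t) = ∑_{w ∈ S_{n-1}} G^β_w(x_1,…,x_{n-2}; ⊖σ_1,…,⊖σ_{n-2}) ·
∂̄^β_w G^β_π(σ_1,…,σ_{n-1}; ⊖t_1,…,⊖t_{n-1})` (the operator `∂̄^β_w`, given by any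
reduced word of `w`, acting on the `σ`-variables).  Substituting `σ_j := x_{τ(j)}`
yields `S = G^β_π(x_1,…,x_{n-1}; ⊖t_1,…,⊖t_{n-1})`. -/
theorem groth_reduction [Field F] [CharZero F] (M : ℕ) (β : F)
    (x t : Fin (M + 1) → F)
    (hind : AlgebraicIndependent ℚ
      (Sum.elim (fun _ : Unit => β) (Sum.elim x t)))
    (π : Equiv.Perm (Fin (M + 2))) (τ : Equiv.Perm (Fin (M + 1)))
    (G1 : Equiv.Perm (Fin (M + 2)) → (Fin (M + 2) → F) → (Fin (M + 2) → F) → F)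
    (hG1 : IsGroth (M + 1) β G1)
    (G2 : Equiv.Perm (Fin (M + 1)) → (Fin (M + 1) → F) → (Fin (M + 1) → F) → F)
    (hG2 : IsGroth M β G2)
    (L : Equiv.Perm (Fin (M + 1)) → List (Fin M))
    (hL : ∀ w, IsReducedWord (L w) w) :
    ∑ w : Equiv.Perm (Fin (M + 1)),
        G2 w (Fin.snoc (fun i : Fin M => x i.castSucc) 0)
            (Fin.snoc (fun i : Fin M => negOm β (x (τ i.castSucc))) 0) *
          ddbarWord β (L w)
            (fun σ' => G1 π (Fin.snoc σ' 0)
              (Fin.snoc (fun i : Fin (M + 1) => negOm β (t i)) 0))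
            (fun j => x (τ j)) =
      G1 π (Fin.snoc x 0) (Fin.snoc (fun i : Fin (M + 1) => negOm β (t i)) 0) := by
  classical
  have hxi : Function.Injective x := by
    intro a b h
    have h' := @AlgebraicIndependent.injective _ _ _ _ _ _ _ hind _ (Sum.inr (Sum.inl a))
      (Sum.inr (Sum.inl b)) (by simpa using h)
    simpa using h'
  have hx0 : ∀ i, x i ≠ 0 := fun i => by
    simpa using hind.ne_zero (Sum.inr (Sum.inl i))
  have hx1 : ∀ i, 1 + β * x i ≠ 0 := by
    intro i h
    have h1 : MvPolynomial.aeval (Sum.elim (fun _ : Unit => β) (Sum.elim x t))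
        (1 + MvPolynomial.X (Sum.inl ()) * MvPolynomial.X (Sum.inr (Sum.inl i)) :
          MvPolynomial (Unit ⊕ (Fin (M + 1) ⊕ Fin (M + 1))) ℚ) = 0 := by
      simpa using h
    have h2 := (algebraicIndependent_iff.1 hind) _ h1
    have h3 := congrArg (MvPolynomial.eval (fun _ => (0 : ℚ))) h2
    simp at h3
  set Y : Fin (M + 1) → F := fun i => negOm β (x i) with hYdef
  have hY : Function.Injective Y := negOm_comp_injective hxi hx1
  set f : (Fin (M + 1) → F) → F := fun σ' => G1 π (Fin.snoc σ' 0)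
              (Fin.snoc (fun i : Fin (M + 1) => negOm β (t i)) 0) with hf
  set x0 : Fin (M + 1) → F := Fin.snoc (fun i : Fin M => x i.castSucc) 0 with hx0def
  have hx0c : ∀ i : Fin M, x0 i.castSucc = x i.castSucc := by
    intro i
    simp [hx0def]
  have hx0l : x0 (Fin.last M) = 0 := by simp [hx0def]
  have hx0i : Function.Injective x0 := by
    intro a b h
    induction a using Fin.lastCases with
    | last =>
      induction b using Fin.lastCases with
      | last => rfl
      | cast b =>
        rw [hx0l, hx0c] at h
        exact absurd h.symm (hx0 _)
    | cast a =>
      induction b using Fin.lastCases with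
      | last =>
        rw [hx0l, hx0c] at h
        exact absurd h (hx0 _)
      | cast b =>
        rw [hx0c, hx0c] at h
        exact hxi h
  have key := reduction_core hG2 hxi hx1 f τ
  have hfx : f x = G1 π (Fin.snoc x 0)
      (Fin.snoc (fun i : Fin (M + 1) => negOm β (t i)) 0) := rfl
  rw [← hfx, ← key]
  refine Finset.sum_congr rfl ?_
  intro w _
  congr 1
  · have e1 := groth_ylast hG2 hx0i
      (Fin.snoc (fun i : Fin M => negOm β (x (τ i.castSucc))) 0) (Y ∘ τ)
      (by intro i; simp [hYdef]) w 1
    have e2 := groth_xlast hG2 hx0i hxi hY hx0c w τ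
    exact e1.trans e2
  · have e1 := ddbarWord_eq β hxi (L w) f τ
    have hw := hL w
    have hp : ((L w).map adj).prod = w := hw.1
    rw [foldr_eq_bfam β hxi _ _ (by rw [hp]; exact hw.2), hp, hw.2] at e1
    exact e1
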